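/- For every integer n ≥ 2, one has (33n^3 − 48n^2 + 24n − 4)/n^3 < A_n/A_{n−1} < 17 + 12√2 − (51/2 + 18√2)/n + (27/2 + (609/64)√2)/n^2 − (645/256 + (225/128)√2)/n^3. -/

import Mathlib

/-!
Write `l n` and `u n` for the lower and upper bounds multiplied by `n ^ 3`, and `p n` for the
coefficient of `A (n - 1)` in the recurrence. Both bounds `l n * A (n - 1) < n ^ 3 * A n` and
`n ^ 3 * A n < u n * A (n - 1)` are proved together with positivity of `A` by induction on `n`.

Let `m = n + 1`, so that `m ^ 3 * A m = p m * A n - n ^ 3 * A (n - 1)`.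

* Lower bound: `p m - l m = n ^ 3` exactly, so the bound at `m` says `A (n - 1) < A n`, which follows
  from the bound at `n` because `n ^ 3 < l n`.
* Upper bound: the bound at `m` says `(p m - u m) * A n < n ^ 3 * A (n - 1)`. By the bound at `n`, it
  suffices that `(p m - u m) * u n < n ^ 6`. The coefficients of `u` agree with the asymptotic
  expansion of the ratio, so all terms of degree at least three cancel in the difference of the two
  sides, leaving a quadratic in `n` that is positive for `n ≥ 1`.
-/

/-- The upper bound for the ratio of consecutive Apéry numbers, multiplied by `x ^ 3`. -/
noncomputable def aperyUpper (x : ℝ) : ℝ :=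
  (17 + 12 * √2) * x ^ 3 - (51 / 2 + 18 * √2) * x ^ 2 + (27 / 2 + (609 / 64) * √2) * x
    - (645 / 256 + (225 / 128) * √2)

lemma aperyUpper_pos {x : ℝ} (hx : 2 ≤ x) : 0 < aperyUpper x := by
  have hs : 0 ≤ √2 := Real.sqrt_nonneg 2
  -- The rational part and the coefficient of `√2` are separately positive.
  have h1 : 0 < 17 * x ^ 3 - 51 / 2 * x ^ 2 + 27 / 2 * x - 645 / 256 := by
    nlinarith [mul_nonneg (sq_nonneg x) (sub_nonneg.2 hx)]
  have h2 : 0 ≤ 12 * x ^ 3 - 18 * x ^ 2 + 609 / 64 * x - 225 / 128 := by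
    nlinarith [mul_nonneg (sq_nonneg x) (sub_nonneg.2 hx)]
  have h3 := mul_nonneg hs h2
  unfold aperyUpper
  linarith

/-- The key inequality of the upper bound: `x ^ 6` exceeds `(p (x + 1) - u (x + 1)) * u x`. -/
lemma aperyUpper_step {x : ℝ} (hx : 2 ≤ x) :
    (34 * (x + 1) ^ 3 - 51 * (x + 1) ^ 2 + 27 * (x + 1) - 5 - aperyUpper (x + 1)) * aperyUpper x
      < x ^ 6 := by
  have hs2 : √2 ^ 2 = 2 := Real.sq_sqrt (by norm_num)
  have hs' : √2 < 3 / 2 := by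
    rw [Real.sqrt_lt' (by norm_num)]
    norm_num
  have key : x ^ 6 -
      (34 * (x + 1) ^ 3 - 51 * (x + 1) ^ 2 + 27 * (x + 1) - 5 - aperyUpper (x + 1)) * aperyUpper x
      = 1593 / 2048 * x ^ 2 - 4005 / 8192 * √2 * x + 11025 / 65536 := by
    unfold aperyUpper
    generalize √2 = s at hs2
    grind
  nlinarith [mul_nonneg (sub_nonneg.2 hs'.le) (by linarith : 0 ≤ x)]

/-- The two bounds with denominators cleared, strengthened by positivity for the induction. -/
lemma apery_bounds (A : ℕ → ℝ) (hA0 : A 0 = 1) (hA1 : A 1 = 5)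
    (hrec : ∀ n : ℕ, 2 ≤ n →
      (n : ℝ) ^ 3 * A n =
        (34 * (n : ℝ) ^ 3 - 51 * (n : ℝ) ^ 2 + 27 * (n : ℝ) - 5) * A (n - 1)
          - ((n : ℝ) - 1) ^ 3 * A (n - 2)) (n : ℕ) (hn : 2 ≤ n) :
    0 < A (n - 1) ∧
      (33 * (n : ℝ) ^ 3 - 48 * (n : ℝ) ^ 2 + 24 * (n : ℝ) - 4) * A (n - 1) < (n : ℝ) ^ 3 * A n ∧
      (n : ℝ) ^ 3 * A n < aperyUpper n * A (n - 1) := by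
  induction n, hn using Nat.le_induction with
  | base =>
    have h2 := hrec 2 le_rfl
    norm_num [hA0, hA1] at h2
    have hs : (1.414 : ℝ) < √2 := by
      rw [Real.lt_sqrt (by norm_num)]
      norm_num
    norm_num at hs
    norm_num [hA1, aperyUpper]
    constructor <;> linarith
  | succ n hn ih =>
    obtain ⟨hpos, hl, hu⟩ := ih
    have hx : (2 : ℝ) ≤ n := by exact_mod_cast hn
    have hr := hrec (n + 1) (by omega)
    have e1 : n + 1 - 1 = n := rfl
    have e2 : n + 1 - 2 = n - 1 := rfl
    rw [e1, e2] at hr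
    rw [e1]
    push_cast at hr ⊢
    generalize (n : ℝ) = x at *
    have hx3 : 0 < x ^ 3 := by positivity
    have hlx : x ^ 3 < 33 * x ^ 3 - 48 * x ^ 2 + 24 * x - 4 := by
      nlinarith [mul_nonneg (sq_nonneg x) (sub_nonneg.2 hx)]
    have hlt : A (n - 1) < A n :=
      lt_of_mul_lt_mul_left ((mul_lt_mul_of_pos_right hlx hpos).trans hl) hx3.le
    have hAn : 0 < A n := hpos.trans hlt
    refine ⟨hAn, ?_, ?_⟩
    · rw [hr]
      nlinarith [mul_lt_mul_of_pos_left hlt hx3]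
    · have hup := aperyUpper_pos hx
      have h1 := mul_lt_mul_of_pos_right (aperyUpper_step hx) hAn
      have h2 := mul_lt_mul_of_pos_left hu hx3
      have h3 : (34 * (x + 1) ^ 3 - 51 * (x + 1) ^ 2 + 27 * (x + 1) - 5 - aperyUpper (x + 1)) * A n
          < x ^ 3 * A (n - 1) := by
        refine lt_of_mul_lt_mul_left ?_ hup.le
        linarith
      rw [hr, add_sub_cancel_right]
      linarith

/-- Bounds for the ratio `A_n / A_{n-1}` of the Apéry numbers, for `n ≥ 2`. -/
theorem stmt_8 (A : ℕ → ℝ) (hA0 : A 0 = 1) (hA1 : A 1 = 5)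
    (hrec : ∀ n : ℕ, 2 ≤ n →
      (n : ℝ) ^ 3 * A n =
        (34 * (n : ℝ) ^ 3 - 51 * (n : ℝ) ^ 2 + 27 * (n : ℝ) - 5) * A (n - 1)
          - ((n : ℝ) - 1) ^ 3 * A (n - 2)) :
    ∀ n : ℕ, 2 ≤ n →
      (33 * (n : ℝ) ^ 3 - 48 * (n : ℝ) ^ 2 + 24 * (n : ℝ) - 4) / (n : ℝ) ^ 3
          < A n / A (n - 1) ∧
        A n / A (n - 1) <
          17 + 12 * Real.sqrt 2 - (51 / 2 + 18 * Real.sqrt 2) / (n : ℝ)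
            + (27 / 2 + (609 / 64) * Real.sqrt 2) / (n : ℝ) ^ 2
            - (645 / 256 + (225 / 128) * Real.sqrt 2) / (n : ℝ) ^ 3 := by
  intro n hn
  obtain ⟨hpos, hl, hu⟩ := apery_bounds A hA0 hA1 hrec n hn
  have hx : (0 : ℝ) < n := by exact_mod_cast (by omega : 0 < n)
  have hx3 : (0 : ℝ) < (n : ℝ) ^ 3 := by positivity
  refine ⟨?_, ?_⟩
  · rw [div_lt_div_iff₀ hx3 hpos]
    linarith
  · have h : A n / A (n - 1) < aperyUpper n / (n : ℝ) ^ 3 := by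
      rw [div_lt_div_iff₀ hpos hx3]
      linarith
    refine h.trans_eq ?_
    unfold aperyUpper
    field_simp
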